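/- Assume X(t,μ) is invertible for every t ∈ I and μ ∈ M, let Y(·,μ) solve dY/dt = A(t,μ)Y + Φ(t,μ), Y(t0,μ) = X0(μ), and suppose there is K ≥ 1 with n̂(μ) ≤ K, ∫_I ‖Φ(t,μ)‖ dt ≤ K, and ‖X0(μ)‖ ≤ K for all μ ∈ M. Then for all μ1, μ2 ∈ M the distance ρ̂(μ1,μ2) = ‖X0(μ1) − X0(μ2)‖ + ∫_I ‖Ẏ(t,μ1) − Ẏ(t,μ2)‖ dt satisfies ρ̂(μ1,μ2) ≤ K̃1 ‖X0(μ1) − X0(μ2)‖ + K̃2 ∫_I ‖A(t,μ1) − A(t,μ2)‖ dt + K̃3 ∫_I ‖Φ(t,μ1) − Φ(t,μ2)‖ dt, where K̃1 = 1 + K^2 e^K, K̃2 = K^2 e^K (1 + K e^K + K^3 e^{2K} + 2K^3 e^{3K}), and K̃3 = 1 + K^3 e^{2K}. -/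

import Mathlib

/-!
The difference `Z = Y₁ - Y₂` of two solutions satisfies `Z' = A₁ Z + f` with the inhomogeneity
`f = (A₁ - A₂) Y₂ + (Φ₁ - Φ₂)`, so the estimate follows by applying Grönwall's inequality twice.
For `Y₂` it gives `‖Y₂‖ ≤ (K + K) e^K` on `I`, hence
`∫ ‖f‖ ≤ F := 2 K e^K ∫ ‖A₁ - A₂‖ + ∫ ‖Φ₁ - Φ₂‖`; for `Z` it gives
`‖Z‖ ≤ (‖Z(t₀)‖ + F) e^K`. Integrating `‖Z'‖ ≤ ‖A₁‖ ‖Z‖ + ‖f‖` yields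
`∫ ‖Z'‖ ≤ K e^K (‖Z(t₀)‖ + F) + F`, whose coefficients are below the stated constants
(`constant_comparison`).

Since the coefficient is merely integrable, Grönwall's inequality (`gronwall_forward`,
`gronwall_abs`) is proved through absolute continuity: if `u ≤ v := c + ∫ k u` with `k ≥ 0`, then
`v exp (-∫ k)` is absolutely continuous with nonpositive derivative almost everywhere.
-/

open MeasureTheory Set

/-- The composition of an absolutely continuous nonpositive function with `exp` is absolutely
continuous, since `exp` is `1`-Lipschitz on `(-∞, 0]`. -/
theorem absolutelyContinuous_exp {f : ℝ → ℝ} {a b : ℝ}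
    (hf : AbsolutelyContinuousOnInterval f a b) (hf0 : ∀ t ∈ uIcc a b, f t ≤ 0) :
    AbsolutelyContinuousOnInterval (fun t => Real.exp (f t)) a b := by
  have hlip : LipschitzOnWith 1 Real.exp (Iic 0) := by
    refine (convex_Iic (0 : ℝ)).lipschitzOnWith_of_nnnorm_deriv_le
      (fun x _ => Real.differentiableAt_exp) fun x hx => ?_
    rw [Real.deriv_exp, ← NNReal.coe_le_coe, coe_nnnorm, Real.norm_of_nonneg (Real.exp_nonneg x)]
    simpa using hx
  rw [absolutelyContinuousOnInterval_iff] at hf ⊢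
  intro ε hε
  obtain ⟨δ, hδ, H⟩ := hf ε hε
  refine ⟨δ, hδ, fun E hE hlt => lt_of_le_of_lt (Finset.sum_le_sum fun i hi => ?_) (H E hE hlt)⟩
  simpa using hlip.dist_le_mul _ (hf0 _ (hE.1 i hi).1) _ (hf0 _ (hE.1 i hi).2)

/-- Grönwall's inequality with an `L¹` coefficient. -/
theorem gronwall_forward {k u : ℝ → ℝ} {c a b : ℝ} (hab : a ≤ b)
    (hk : IntervalIntegrable k volume a b) (hk0 : ∀ t, 0 ≤ k t) (hu : ContinuousOn u (uIcc a b))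
    (h : ∀ t ∈ uIcc a b, u t ≤ c + ∫ s in a..t, k s * u s) :
    u b ≤ c * Real.exp (∫ s in a..b, k s) := by
  have hku : IntervalIntegrable (fun s => k s * u s) volume a b := hk.mul_continuousOn hu
  set P : ℝ → ℝ := fun t => ∫ s in a..t, k s with hP
  set Q : ℝ → ℝ := fun t => ∫ s in a..t, k s * u s with hQ
  have hPac : AbsolutelyContinuousOnInterval P a b :=
    hk.absolutelyContinuousOnInterval_intervalIntegral left_mem_uIcc
  have hQac : AbsolutelyContinuousOnInterval Q a b :=
    hku.absolutelyContinuousOnInterval_intervalIntegral left_mem_uIcc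
  have hcac : AbsolutelyContinuousOnInterval (fun _ : ℝ => c) a b :=
    (contDiff_const.contDiffOn).absolutelyContinuousOnInterval
  have hEac : AbsolutelyContinuousOnInterval (fun t => Real.exp (-P t)) a b := by
    refine absolutelyContinuous_exp hPac.fun_neg fun t ht => ?_
    rw [uIcc_of_le hab] at ht
    exact neg_nonpos.2 (intervalIntegral.integral_nonneg ht.1 fun s _ => hk0 s)
  have hFac := (hcac.fun_add hQac).fun_mul hEac
  have key := hFac.integral_deriv_eq_sub
  -- The derivative of `(c + Q) exp (-P)` is `k (u - (c + Q)) exp (-P) ≤ 0`.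
  have hle : ∫ x in a..b, deriv (fun t => (c + Q t) * Real.exp (-P t)) x ≤ 0 := by
    have hneg : 0 ≤ ∫ x in a..b, -deriv (fun t => (c + Q t) * Real.exp (-P t)) x := by
      refine intervalIntegral.integral_nonneg_of_ae_restrict hab ?_
      rw [Filter.EventuallyLE, ae_restrict_iff' measurableSet_Icc]
      filter_upwards [hk.ae_hasDerivAt_integral, hku.ae_hasDerivAt_integral] with x h1 h2 hx
      rw [← uIcc_of_le hab] at hx
      have d1 : HasDerivAt P (k x) x := h1 hx a left_mem_uIcc
      have d2 : HasDerivAt Q (k x * u x) x := h2 hx a left_mem_uIcc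
      have d : HasDerivAt (fun t => (c + Q t) * Real.exp (-P t)) _ x :=
        (d2.const_add c).mul d1.neg.exp
      rw [d.deriv]
      have hux : u x ≤ c + Q x := h x hx
      have : 0 ≤ k x * (c + Q x - u x) * Real.exp (-P x) :=
        mul_nonneg (mul_nonneg (hk0 x) (by linarith)) (Real.exp_nonneg _)
      simp only [Pi.zero_apply, Pi.neg_apply]
      linarith
    rw [intervalIntegral.integral_neg] at hneg
    linarith
  have ha : (c + Q a) * Real.exp (-P a) = c := by simp [hP, hQ]
  rw [key, ha] at hle
  have hb : u b ≤ c + Q b := h b right_mem_uIcc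
  calc u b ≤ c + Q b := hb
    _ = ((c + Q b) * Real.exp (-P b)) * Real.exp (P b) := by
      rw [mul_assoc, ← Real.exp_add]; simp
    _ ≤ c * Real.exp (P b) := by gcongr; linarith

/-- Two-sided form of `gronwall_forward`, the point `b` lying on either side of `a`. -/
theorem gronwall_abs {k u : ℝ → ℝ} {c a b : ℝ}
    (hk : IntervalIntegrable k volume a b) (hk0 : ∀ t, 0 ≤ k t) (hu : ContinuousOn u (uIcc a b))
    (hu0 : ∀ t, 0 ≤ u t)
    (h : ∀ t ∈ uIcc a b, u t ≤ c + |∫ s in a..t, k s * u s|) :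
    u b ≤ c * Real.exp |∫ s in a..b, k s| := by
  rcases le_total a b with hab | hab
  · have := gronwall_forward hab hk hk0 hu (c := c) fun t ht => by
      have h1 := h t ht
      rw [uIcc_of_le hab] at ht
      rwa [abs_of_nonneg (intervalIntegral.integral_nonneg ht.1
        fun s _ => mul_nonneg (hk0 s) (hu0 s))] at h1
    rwa [abs_of_nonneg (intervalIntegral.integral_nonneg hab fun s _ => hk0 s)]
  · have hmem : ∀ t ∈ uIcc (-a) (-b), -t ∈ uIcc a b := fun t ht => by
      rw [uIcc_of_le (neg_le_neg hab)] at ht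
      rw [uIcc_of_ge hab]
      exact ⟨by linarith [ht.2], by linarith [ht.1]⟩
    have := gronwall_forward (k := fun s => k (-s)) (u := fun s => u (-s)) (c := c)
      (neg_le_neg hab) (by simpa using hk.comp_sub_left 0) (fun t => hk0 _)
      (hu.comp continuousOn_neg hmem) fun t ht => by
        have h1 := h (-t) (hmem t ht)
        rw [uIcc_of_le (neg_le_neg hab)] at ht
        rw [intervalIntegral.integral_comp_neg (fun s => k s * u s), neg_neg]
        rwa [intervalIntegral.integral_symm, abs_neg, abs_of_nonneg
          (intervalIntegral.integral_nonneg (by linarith [ht.1])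
            fun s _ => mul_nonneg (hk0 s) (hu0 s))] at h1
    rw [intervalIntegral.integral_comp_neg k, neg_neg, neg_neg] at this
    rwa [intervalIntegral.integral_symm, abs_neg,
      abs_of_nonneg (intervalIntegral.integral_nonneg hab fun s _ => hk0 s)]

theorem intervalIntegrable_of_ordConnected {R : Type*} [NormedAddCommGroup R] {I : Set ℝ}
    (hI : I.OrdConnected) {f : ℝ → R} (hf : IntegrableOn f I volume) {s t : ℝ} (hs : s ∈ I)
    (ht : t ∈ I) : IntervalIntegrable f volume s t :=
  (hf.mono_set (hI.uIcc_subset hs ht)).intervalIntegrable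

theorem abs_integral_le_setIntegral {I : Set ℝ} (hI : I.OrdConnected) {f : ℝ → ℝ}
    (hf : IntegrableOn f I volume) (hf0 : ∀ t, 0 ≤ f t) {s t : ℝ} (hs : s ∈ I) (ht : t ∈ I) :
    |∫ x in s..t, f x| ≤ ∫ x in I, f x := by
  rw [intervalIntegral.abs_integral_eq_abs_integral_uIoc, abs_of_nonneg (integral_nonneg hf0)]
  exact setIntegral_mono_set hf (Filter.Eventually.of_forall hf0)
    (uIoc_subset_uIcc.trans (hI.uIcc_subset hs ht)).eventuallyLE

/-- A priori bound, uniform on `I`, for the solutions of `W' = A W + f`, `W(t₀) = w₀`. -/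
theorem norm_solution_le {R : Type*} [NormedRing R] [NormedAlgebra ℝ R]
    {I : Set ℝ} (hI : I.OrdConnected) {t0 : ℝ} (ht0 : t0 ∈ I) {A f W : ℝ → R} {w0 : R}
    (hA : IntegrableOn A I volume) (hf : IntegrableOn f I volume) (hc : ContinuousOn W I)
    (hW : ∀ t ∈ I, W t = w0 + ∫ s in t0..t, (A s * W s + f s)) :
    ∀ t ∈ I, ‖W t‖ ≤ (‖w0‖ + ∫ s in I, ‖f s‖) * Real.exp (∫ s in I, ‖A s‖) := by
  intro t ht
  have hsub : uIcc t0 t ⊆ I := hI.uIcc_subset ht0 ht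
  have hAi := intervalIntegrable_of_ordConnected hI hA.norm ht0 ht
  have hG := gronwall_abs (k := fun s => ‖A s‖) (u := fun s => ‖W s‖)
    (c := ‖w0‖ + ∫ s in I, ‖f s‖) hAi (fun _ => norm_nonneg _) (hc.mono hsub).norm
    (fun _ => norm_nonneg _) fun r hr => by
      have hrI := hsub hr
      have hprod : IntervalIntegrable (fun s => ‖A s‖ * ‖W s‖) volume t0 r :=
        (intervalIntegrable_of_ordConnected hI hA.norm ht0 hrI).mul_continuousOn
          (hc.mono (hI.uIcc_subset ht0 hrI)).norm
      have hfi := intervalIntegrable_of_ordConnected hI hf.norm ht0 hrI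
      have h1 : ‖∫ s in t0..r, (A s * W s + f s)‖ ≤
          |∫ s in t0..r, (‖A s‖ * ‖W s‖ + ‖f s‖)| :=
        intervalIntegral.norm_integral_le_abs_of_norm_le
          (Filter.Eventually.of_forall fun s =>
            (norm_add_le _ _).trans (by gcongr; exact norm_mul_le _ _)) (hprod.add hfi)
      rw [intervalIntegral.integral_add hprod hfi] at h1
      have h2 := abs_integral_le_setIntegral hI hf.norm (fun _ => norm_nonneg _) ht0 hrI
      have h3 := norm_add_le w0 (∫ s in t0..r, (A s * W s + f s))
      have h4 := abs_add_le (∫ s in t0..r, ‖A s‖ * ‖W s‖) (∫ s in t0..r, ‖f s‖)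
      rw [hW r hrI]
      linarith
  refine hG.trans (mul_le_mul_of_nonneg_left (Real.exp_le_exp.2 ?_) ?_)
  · exact abs_integral_le_setIntegral hI hA.norm (fun _ => norm_nonneg _) ht0 ht
  · exact add_nonneg (norm_nonneg _) (integral_nonneg fun _ => norm_nonneg _)

theorem continuousOn_of_integral_eq {R : Type*} [NormedAddCommGroup R] [NormedSpace ℝ R]
    {I : Set ℝ} (hIo : IsOpen I) {t0 : ℝ} {g W : ℝ → R} {w0 : R}
    (hg : ∀ t ∈ I, IntervalIntegrable g volume t0 t)
    (hW : ∀ t ∈ I, W t = w0 + ∫ s in t0..t, g s) : ContinuousOn W I := by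
  intro t ht
  obtain ⟨ε, hε, hb⟩ := Metric.isOpen_iff.1 hIo t ht
  have hsub : Icc (t - ε / 2) (t + ε / 2) ⊆ I := fun s hs => hb (by
    rw [Metric.mem_ball, Real.dist_eq, abs_lt]
    constructor <;> linarith [hs.1, hs.2])
  have hle : t - ε / 2 ≤ t + ε / 2 := by linarith
  have hcI := hsub (left_mem_Icc.2 hle)
  have hint := (hg _ hcI).symm.trans (hg _ (hsub (right_mem_Icc.2 hle)))
  have hprim := intervalIntegral.continuousOn_primitive_interval' hint left_mem_uIcc
  rw [uIcc_of_le hle] at hprim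
  have hWc : ContinuousOn W (Icc (t - ε / 2) (t + ε / 2)) := by
    have hadd : ContinuousOn (fun x => w0 + ((∫ s in t0..(t - ε / 2), g s) +
        ∫ s in (t - ε / 2)..x, g s)) (Icc (t - ε / 2) (t + ε / 2)) :=
      continuousOn_const.add (continuousOn_const.add hprim)
    refine hadd.congr fun s hs => ?_
    beta_reduce
    rw [hW s (hsub hs), intervalIntegral.integral_add_adjacent_intervals (hg _ hcI)
      ((hg _ hcI).symm.trans (hg _ (hsub hs)))]
  exact (hWc.continuousAt (Icc_mem_nhds (by linarith) (by linarith))).continuousWithinAt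

/-- `IntegrableOn.add` for normed groups, where the `ContinuousENorm` instance found on a space of
continuous linear maps unifies. -/
theorem integrableOn_fun_add {R : Type*} [NormedAddCommGroup R] {I : Set ℝ} {f g : ℝ → R}
    (hf : IntegrableOn f I volume) (hg : IntegrableOn g I volume) :
    IntegrableOn (fun t => f t + g t) I volume :=
  hf.add hg

theorem integrableOn_mul_of_bound {R : Type*} [NormedRing R] [SecondCountableTopology R]
    {I : Set ℝ} (hIm : MeasurableSet I) {A W : ℝ → R} {C : ℝ}
    (hA : IntegrableOn A I volume) (hW : ContinuousOn W I) (hC : ∀ t ∈ I, ‖W t‖ ≤ C) :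
    IntegrableOn (fun t => A t * W t) I volume ∧
      ∫ t in I, ‖A t * W t‖ ≤ C * ∫ t in I, ‖A t‖ := by
  have hle : ∀ᵐ t ∂(volume.restrict I), ‖A t * W t‖ ≤ C * ‖A t‖ := by
    filter_upwards [ae_restrict_mem hIm] with t ht
    rw [mul_comm C]
    exact (norm_mul_le _ _).trans (mul_le_mul_of_nonneg_left (hC t ht) (norm_nonneg _))
  have hint : IntegrableOn (fun t => A t * W t) I volume :=
    (hA.norm.const_mul C).mono' (hA.aestronglyMeasurable.mul (hW.aestronglyMeasurable hIm)) hle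
  refine ⟨hint, ?_⟩
  rw [← integral_const_mul]
  exact integral_mono_ae hint.norm (hA.norm.const_mul C) hle

/-- Elementary comparison of the constants produced by Grönwall's inequality with the stated
ones, `d`, `a`, `p` standing for the distances of the initial values, of the coefficients and of
the inhomogeneities. -/
theorem constant_comparison {K d a p : ℝ} (hK : 1 ≤ K) (hd : 0 ≤ d) (ha : 0 ≤ a) (hp : 0 ≤ p) :
    d + ((d + (2 * K * Real.exp K * a + p)) * Real.exp K * K + (2 * K * Real.exp K * a + p)) ≤
      (1 + K ^ 2 * Real.exp K) * d +
        (K ^ 2 * Real.exp K * (1 + K * Real.exp K + K ^ 3 * Real.exp (2 * K) +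
          2 * K ^ 3 * Real.exp (3 * K))) * a + (1 + K ^ 3 * Real.exp (2 * K)) * p := by
  have h2 : Real.exp (2 * K) = Real.exp K ^ 2 := by rw [← Real.exp_nat_mul]; norm_num
  have h3 : Real.exp (3 * K) = Real.exp K ^ 3 := by rw [← Real.exp_nat_mul]; norm_num
  have hE : 2 ≤ Real.exp K := by linarith [Real.add_one_le_exp K]
  rw [h2, h3]
  generalize Real.exp K = E at hE
  have hE1 : 1 ≤ E := by linarith
  have hKE : 1 ≤ K * E := one_le_mul_of_one_le_of_one_le hK hE1
  have e1 : K * E ≤ K ^ 2 * E := by gcongr; nlinarith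
  have e3 : K * E ≤ K ^ 3 * E ^ 2 := by
    gcongr
    · exact le_self_pow₀ hK (by norm_num)
    · exact le_self_pow₀ hE1 (by norm_num)
  have e2 : 2 * K * E * (E * K) + 2 * K * E ≤
      K ^ 2 * E * (1 + K * E + K ^ 3 * E ^ 2 + 2 * K ^ 3 * E ^ 3) := by
    have f1 : 2 * K * E * (E * K) ≤ K ^ 2 * E * (2 * K ^ 3 * E ^ 3) := by
      have : E ≤ K ^ 3 * E ^ 3 := by
        calc E = 1 * E := by ring
          _ ≤ K ^ 3 * E ^ 3 := by
            gcongr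
            · exact one_le_pow₀ hK
            · exact le_self_pow₀ hE1 (by norm_num)
      nlinarith [mul_le_mul_of_nonneg_left this (by positivity : 0 ≤ 2 * K ^ 2 * E)]
    have f2 : 2 * K * E ≤ K ^ 2 * E * (1 + K * E) := by nlinarith
    have f3 : 0 ≤ K ^ 2 * E * (K ^ 3 * E ^ 2) := by positivity
    linarith
  linarith [mul_le_mul_of_nonneg_right e1 hd, mul_le_mul_of_nonneg_right e2 ha,
    mul_le_mul_of_nonneg_right e3 hp]

/-- Under uniform bounds `n̂(μ) ≤ K`, `∫_I ‖Φ(t,μ)‖ dt ≤ K`,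
`‖X0(μ)‖ ≤ K` (`K ≥ 1`), the distance
`ρ̂(μ₁,μ₂) = ‖X0(μ₁) − X0(μ₂)‖ + ∫_I ‖Ẏ(t,μ₁) − Ẏ(t,μ₂)‖ dt` satisfies
`ρ̂(μ₁,μ₂) ≤ K̃₁ ‖X0(μ₁) − X0(μ₂)‖ + K̃₂ ∫_I ‖A(t,μ₁) − A(t,μ₂)‖ dt
  + K̃₃ ∫_I ‖Φ(t,μ₁) − Φ(t,μ₂)‖ dt`, with `K̃₁ = 1 + K²e^K`,
`K̃₂ = K²e^K(1 + Ke^K + K³e^{2K} + 2K³e^{3K})`, `K̃₃ = 1 + K³e^{2K}`. -/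
theorem inhomogeneous_solution_rho_bound (n m : ℕ)
    (I : Set ℝ) (hIopen : IsOpen I) (hIord : I.OrdConnected)
    (t0 : ℝ) (ht0 : t0 ∈ I)
    (M : Set (EuclideanSpace ℝ (Fin m))) (hMopen : IsOpen M) (hMconn : IsConnected M)
    (A Φ X Y : ℝ → EuclideanSpace ℝ (Fin m) →
      (EuclideanSpace ℝ (Fin n) →L[ℝ] EuclideanSpace ℝ (Fin n)))
    (X0 : EuclideanSpace ℝ (Fin m) →
      (EuclideanSpace ℝ (Fin n) →L[ℝ] EuclideanSpace ℝ (Fin n)))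
    (hA : ∀ μ ∈ M, IntegrableOn (fun t => A t μ) I volume)
    (hΦ : ∀ μ ∈ M, IntegrableOn (fun t => Φ t μ) I volume)
    (hAX : ∀ μ ∈ M, ∀ t ∈ I, IntervalIntegrable (fun s => A s μ * X s μ) volume t0 t)
    (hX : ∀ μ ∈ M, ∀ t ∈ I, X t μ = 1 + ∫ s in t0..t, A s μ * X s μ)
    (hinv : ∀ t ∈ I, ∀ μ ∈ M, IsUnit (X t μ))
    (hAY : ∀ μ ∈ M, ∀ t ∈ I,
      IntervalIntegrable (fun s => A s μ * Y s μ + Φ s μ) volume t0 t)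
    (hY : ∀ μ ∈ M, ∀ t ∈ I,
      Y t μ = X0 μ + ∫ s in t0..t, (A s μ * Y s μ + Φ s μ))
    (K : ℝ) (hK : 1 ≤ K)
    (hKA : ∀ μ ∈ M, (∫ t in I, ‖A t μ‖) ≤ K)
    (hKΦ : ∀ μ ∈ M, (∫ t in I, ‖Φ t μ‖) ≤ K)
    (hKX0 : ∀ μ ∈ M, ‖X0 μ‖ ≤ K) :
    ∀ μ1 ∈ M, ∀ μ2 ∈ M,
      ‖X0 μ1 - X0 μ2‖ +
          (∫ t in I, ‖(A t μ1 * Y t μ1 + Φ t μ1) - (A t μ2 * Y t μ2 + Φ t μ2)‖) ≤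
        (1 + K ^ 2 * Real.exp K) * ‖X0 μ1 - X0 μ2‖ +
        (K ^ 2 * Real.exp K *
            (1 + K * Real.exp K + K ^ 3 * Real.exp (2 * K) +
              2 * K ^ 3 * Real.exp (3 * K))) *
          (∫ t in I, ‖A t μ1 - A t μ2‖) +
        (1 + K ^ 3 * Real.exp (2 * K)) * ∫ t in I, ‖Φ t μ1 - Φ t μ2‖ := by
  intro μ1 h1 μ2 h2
  have hIm : MeasurableSet I := hIopen.measurableSet
  have hYc : ∀ μ ∈ M, ContinuousOn (fun t => Y t μ) I := fun μ hμ =>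
    continuousOn_of_integral_eq hIopen (hAY μ hμ) (hY μ hμ)
  have hexp : ∀ μ ∈ M, Real.exp (∫ t in I, ‖A t μ‖) ≤ Real.exp K := fun μ hμ =>
    Real.exp_le_exp.2 (hKA μ hμ)
  have hY2 : ∀ t ∈ I, ‖Y t μ2‖ ≤ 2 * K * Real.exp K := fun t ht =>
    (norm_solution_le hIord ht0 (hA μ2 h2) (hΦ μ2 h2) (hYc μ2 h2) (hY μ2 h2) t ht).trans
      (mul_le_mul (by linarith [hKΦ μ2 h2, hKX0 μ2 h2]) (hexp μ2 h2) (Real.exp_nonneg _)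
        (by linarith))
  have hdA : IntegrableOn (fun t => A t μ1 - A t μ2) I volume := (hA μ1 h1).sub (hA μ2 h2)
  have hdΦ : IntegrableOn (fun t => Φ t μ1 - Φ t μ2) I volume := (hΦ μ1 h1).sub (hΦ μ2 h2)
  -- The difference `Y₁ - Y₂` solves `Z' = A₁ Z + f` with `f = (A₁ - A₂) Y₂ + (Φ₁ - Φ₂)`.
  obtain ⟨hg, hgle⟩ := integrableOn_mul_of_bound hIm hdA (hYc μ2 h2) hY2
  have hf : IntegrableOn (fun t => (A t μ1 - A t μ2) * Y t μ2 + (Φ t μ1 - Φ t μ2)) I volume :=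
    integrableOn_fun_add hg hdΦ
  have hfle : ∫ t in I, ‖(A t μ1 - A t μ2) * Y t μ2 + (Φ t μ1 - Φ t μ2)‖ ≤
      2 * K * Real.exp K * (∫ t in I, ‖A t μ1 - A t μ2‖) + ∫ t in I, ‖Φ t μ1 - Φ t μ2‖ := by
    refine (integral_mono hf.norm (hg.norm.add hdΦ.norm) fun t => norm_add_le _ _).trans ?_
    rw [integral_add' hg.norm hdΦ.norm]
    linarith
  have hsplit : ∀ t, (A t μ1 * Y t μ1 + Φ t μ1) - (A t μ2 * Y t μ2 + Φ t μ2) =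
      A t μ1 * (Y t μ1 - Y t μ2) + ((A t μ1 - A t μ2) * Y t μ2 + (Φ t μ1 - Φ t μ2)) := fun t => by
    rw [mul_sub, sub_mul]
    abel
  have hZc : ContinuousOn (fun t => Y t μ1 - Y t μ2) I := (hYc μ1 h1).sub (hYc μ2 h2)
  have hZeq : ∀ t ∈ I, Y t μ1 - Y t μ2 = (X0 μ1 - X0 μ2) + ∫ s in t0..t,
      (A s μ1 * (Y s μ1 - Y s μ2) + ((A s μ1 - A s μ2) * Y s μ2 + (Φ s μ1 - Φ s μ2))) := by
    intro t ht
    simp_rw [← hsplit]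
    rw [intervalIntegral.integral_sub (hAY μ1 h1 t ht) (hAY μ2 h2 t ht), hY μ1 h1 t ht,
      hY μ2 h2 t ht]
    abel
  have hda : 0 ≤ ∫ t in I, ‖A t μ1 - A t μ2‖ := integral_nonneg fun _ => norm_nonneg _
  have hdp : 0 ≤ ∫ t in I, ‖Φ t μ1 - Φ t μ2‖ := integral_nonneg fun _ => norm_nonneg _
  have hrhs : 0 ≤ ‖X0 μ1 - X0 μ2‖ + (2 * K * Real.exp K * (∫ t in I, ‖A t μ1 - A t μ2‖) +
      ∫ t in I, ‖Φ t μ1 - Φ t μ2‖) := by positivity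
  have hZ : ∀ t ∈ I, ‖Y t μ1 - Y t μ2‖ ≤ (‖X0 μ1 - X0 μ2‖ +
      (2 * K * Real.exp K * (∫ t in I, ‖A t μ1 - A t μ2‖) +
        ∫ t in I, ‖Φ t μ1 - Φ t μ2‖)) * Real.exp K := fun t ht =>
    (norm_solution_le hIord ht0 (hA μ1 h1) hf hZc hZeq t ht).trans
      (mul_le_mul (by linarith) (hexp μ1 h1) (Real.exp_nonneg _) hrhs)
  obtain ⟨hAZ, hAZle⟩ := integrableOn_mul_of_bound hIm (hA μ1 h1) hZc hZ
  have hfinal : ∫ t in I, ‖(A t μ1 * Y t μ1 + Φ t μ1) - (A t μ2 * Y t μ2 + Φ t μ2)‖ ≤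
      (∫ t in I, ‖A t μ1 * (Y t μ1 - Y t μ2)‖) +
        ∫ t in I, ‖(A t μ1 - A t μ2) * Y t μ2 + (Φ t μ1 - Φ t μ2)‖ := by
    simp_rw [hsplit]
    rw [← integral_add hAZ.norm hf.norm]
    exact integral_mono (integrableOn_fun_add hAZ hf).norm (hAZ.norm.add hf.norm) fun t => norm_add_le _ _
  have hAZK := mul_le_mul_of_nonneg_left (hKA μ1 h1) (mul_nonneg hrhs (Real.exp_nonneg K))
  have hconst := constant_comparison hK (norm_nonneg (X0 μ1 - X0 μ2)) hda hdp
  linarith
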